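/- arXiv:2205.01976 — 2 statements merged into one kernel-verified Lean document; each statement's English description precedes it below -/
import Mathlib

section
/- If G is a finite simple graph with at least one vertex and χ(G) ∈ {Δ(G), Δ(G)+1}, then vs_χ(G) = ivs_χ(G). -/
/-- The chromatic number of `G` as a natural number. -/
noncomputable def chi {V : Type*} [Fintype V] (G : SimpleGraph V) : ℕ :=
  G.chromaticNumber.toNat

/-- The maximum degree of `G` (classical version, no decidability assumptions). -/
noncomputable def maxDeg {V : Type*} [Fintype V] (G : SimpleGraph V) : ℕ :=
  @SimpleGraph.maxDegree V G _ (Classical.decRel _)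

/-- The degree of a vertex `v` of `G` (classical version). -/
noncomputable def deg {V : Type*} [Fintype V] (G : SimpleGraph V) (v : V) : ℕ :=
  @SimpleGraph.degree V G v (@SimpleGraph.neighborSetFintype V G _ (Classical.decRel _) v)

/-- The chromatic vertex stability of `G`: the minimum size of a set `S` of vertices
such that the subgraph induced on the complement of `S` has chromatic number `χ(G) - 1`. -/
noncomputable def vsChi {V : Type*} [Fintype V] [DecidableEq V] (G : SimpleGraph V) : ℕ :=
  sInf {n : ℕ | ∃ S : Finset V, S.card = n ∧
    chi (G.induce (↑(Sᶜ) : Set V)) = chi G - 1}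

/-- The independent chromatic vertex stability of `G`: the minimum size of an independent
set `S` of vertices such that the subgraph induced on the complement of `S` has chromatic
number `χ(G) - 1`. -/
noncomputable def ivsChi {V : Type*} [Fintype V] [DecidableEq V] (G : SimpleGraph V) : ℕ :=
  sInf {n : ℕ | ∃ S : Finset V, S.card = n ∧
    (∀ x ∈ S, ∀ y ∈ S, ¬ G.Adj x y) ∧
    chi (G.induce (↑(Sᶜ) : Set V)) = chi G - 1}

/-!
Write `χ(G) = n + 1`, so that `Δ(G) ≤ n + 1`, and fix a proper `(n + 1)`-colouring `f` of `G` with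
one distinguished colour. Among the minimum sets `S` for which `G - S` is `n`-colourable, choose one
with as few vertices outside the distinguished class of `f` as possible and, subject to that, with
as few vertices as possible having a neighbour in `S`. Suppose that `S` contains an edge; one of its
ends, say `x`, lies outside the distinguished class. Put `T = S \ {x}`, and let `R` be the set of
vertices `y` for which `T ∪ {y}` is again a deletion set.

If some vertex of `R` has no neighbour in `T`, or lies in the distinguished class, exchanging it
with `x` contradicts the choice of `S`. Otherwise every `y ∈ R` has a neighbour in `T`, so by the
degree bound its other neighbours have pairwise distinct colours in any `n`-colouring of
`G - T - y`; sliding `y` to any of them shows that `R` is closed under adjacency in `G - T`. Then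
`f` on `R`, which avoids the distinguished colour, together with an old colouring off `R` is a
proper `n`-colouring of `G - T`, contradicting the minimality of `S`.
-/

open Finset Function

namespace ChromaticStability

section PartialColoring

variable {V α : Type*} {G : SimpleGraph V} {S T : Finset V} {c : V → Option α} {x y : V}

/-- `c` is a proper colouring of `G - S` with colours in `α`; the value `none` marks the vertices
of `S`. -/
structure IsPartialColoring (G : SimpleGraph V) (S : Finset V) (c : V → Option α) : Prop where
  eq_none_iff : ∀ v, c v = none ↔ v ∈ S
  valid : ∀ ⦃u v⦄, G.Adj u v → c u = c v → c u = none

lemma IsPartialColoring.piecewise (hc : IsPartialColoring G S c) (f : G.Coloring (Option α))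
    {A : Set V} [DecidablePred (· ∈ A)] (hf : ∀ v ∈ A, f v ≠ none)
    (hA : ∀ ⦃u v⦄, u ∈ A → v ∉ A → G.Adj u v → v ∈ S) (hT : (T : Set V) = (S : Set V) \ A) :
    IsPartialColoring G T (A.piecewise f c) where
  eq_none_iff v := by
    have hvT : v ∈ T ↔ v ∈ S ∧ v ∉ A := by simpa using Set.ext_iff.1 hT v
    by_cases hv : v ∈ A <;> simp [hv, hvT, hf, hc.eq_none_iff]
  valid u v huv heq := by
    by_cases hu : u ∈ A <;> by_cases hv : v ∈ A <;>
      simp only [hu, hv, Set.piecewise_eq_of_mem, Set.piecewise_eq_of_notMem,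
        not_false_eq_true] at heq ⊢
    · exact absurd heq (f.valid huv)
    · exact heq.trans ((hc.eq_none_iff v).2 (hA hu hv huv))
    · exact (hc.eq_none_iff u).2 (hA hv hu huv.symm)
    · exact hc.valid huv heq

variable [DecidableEq V]

lemma IsPartialColoring.update (hc : IsPartialColoring G S c) {a : α}
    (ha : ∀ y, G.Adj x y → c y ≠ some a) :
    IsPartialColoring G (S.erase x) (update c x (some a)) where
  eq_none_iff v := by
    by_cases hv : v = x <;> simp [hv, hc.eq_none_iff]
  valid u v huv heq := by
    by_cases hu : u = x
    · subst hu
      exact absurd (by simpa [huv.ne'] using heq.symm) (ha v huv)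
    · by_cases hv : v = x
      · subst hv
        exact absurd (by simpa [hu] using heq) (ha u huv.symm)
      · simpa [hu] using hc.valid huv (by simpa [hu, hv] using heq)

lemma IsPartialColoring.comp_swap (hc : IsPartialColoring G (insert x T) c) (hx : x ∉ T)
    (hy : y ∉ T) (hxy : G.Adj x y) (hinj : Set.InjOn c (G.neighborSet x)) :
    IsPartialColoring G (insert y T) (c ∘ Equiv.swap x y) where
  eq_none_iff v := by
    simp only [comp_apply, hc.eq_none_iff, Equiv.swap_apply_def]
    grind
  valid u v huv heq := by
    have hcx : c x = none := (hc.eq_none_iff x).2 (mem_insert_self x T)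
    -- The colour of `y` occurs only once around `x`, so it can be moved to `x`.
    have hcol : ∀ z, G.Adj x z → c y = c z → z = y := fun z hxz h => (hinj hxy hxz h).symm
    have hval := hc.valid huv
    have hne := huv.ne
    simp only [comp_apply, Equiv.swap_apply_def] at heq ⊢
    grind [G.adj_comm]

end PartialColoring

section DeletionSet

variable {V : Type*} (G : SimpleGraph V) (α : Type*)

/-- `S` is a deletion set: `G - S` can be properly coloured with colours in `α`. -/
def IsDeletionSet (S : Finset V) : Prop :=
  ∃ c : V → Option α, IsPartialColoring G S c

/-- `S` is a deletion set of minimum size. -/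
def IsMinDeletionSet (S : Finset V) : Prop :=
  MinimalFor (IsDeletionSet G α) card S

variable {G α} {S T : Finset V} {c : V → Option α} {x y w : V}

lemma isDeletionSet_univ [Fintype V] : IsDeletionSet G α univ :=
  ⟨fun _ => none, by simp, by simp⟩

lemma IsMinDeletionSet.exists_adj_eq_some (hS : IsMinDeletionSet G α S)
    (hc : IsPartialColoring G S c) (hx : x ∈ S) (a : α) : ∃ y, G.Adj x y ∧ c y = some a := by
  classical
  by_contra! h
  exact hS.not_prop_of_lt (card_erase_lt_of_mem hx) ⟨_, hc.update h⟩

lemma IsMinDeletionSet.injOn_neighborSet [Fintype α] [Fintype (G.neighborSet x)]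
    (hdeg : G.degree x ≤ Fintype.card α + 1) (hS : IsMinDeletionSet G α S)
    (hc : IsPartialColoring G S c) (hx : x ∈ S) (hw : w ∈ S) (hxw : G.Adj x w) :
    Set.InjOn c (G.neighborSet x) := by
  rw [← G.coe_neighborFinset]
  refine injOn_of_surjOn_of_card_le c (t := univ) (by simp [Set.MapsTo]) ?_
    (by simpa using hdeg)
  rintro (_ | a) -
  · exact ⟨w, by simpa using hxw, (hc.eq_none_iff w).2 hw⟩
  · obtain ⟨y, hxy, hy⟩ := hS.exists_adj_eq_some hc hx a
    exact ⟨y, by simpa using hxy, hy⟩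

variable [DecidableEq V]

variable (G α) in
/-- The vertices outside `T` which together with `T` form a deletion set. -/
def extensions (T : Finset V) : Set V :=
  {y | y ∉ T ∧ IsDeletionSet G α (insert y T)}

lemma IsMinDeletionSet.insert_of_mem_extensions (h : IsMinDeletionSet G α (insert x T))
    (hx : x ∉ T) (hy : y ∈ extensions G α T) : IsMinDeletionSet G α (insert y T) := by
  refine ⟨hy.2, fun R hR _ => (h.le hR).trans' ?_⟩
  rw [card_insert_of_notMem hx, card_insert_of_notMem hy.1]

lemma IsMinDeletionSet.not_isDeletionSet (h : IsMinDeletionSet G α (insert x T)) (hx : x ∉ T) :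
    ¬ IsDeletionSet G α T :=
  h.not_prop_of_lt (card_lt_card (ssubset_insert hx))

lemma IsMinDeletionSet.mem_extensions_of_adj [Fintype α] [Fintype (G.neighborSet x)]
    (hdeg : G.degree x ≤ Fintype.card α + 1) (hS : IsMinDeletionSet G α (insert x T))
    (hx : x ∉ T) (hw : w ∈ T) (hxw : G.Adj x w) (hy : y ∉ T) (hxy : G.Adj x y) :
    y ∈ extensions G α T := by
  obtain ⟨c, hc⟩ := hS.prop
  have hinj := hS.injOn_neighborSet hdeg hc (mem_insert_self x T) (mem_insert_of_mem hw) hxw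
  exact ⟨hy, _, hc.comp_swap hx hy hxy hinj⟩

lemma IsMinDeletionSet.exists_mem_extensions [G.LocallyFinite] [Fintype α]
    (hdeg : ∀ v, G.degree v ≤ Fintype.card α + 1) (f : G.Coloring (Option α))
    (hS : IsMinDeletionSet G α (insert x T)) (hx : x ∉ T) :
    ∃ y ∈ extensions G α T, f y = none ∨ ∀ w ∈ T, ¬ G.Adj y w := by
  classical
  by_contra! h
  obtain ⟨c, hc⟩ := hS.prop
  have hclosed : ∀ ⦃u v⦄, u ∈ extensions G α T → v ∉ extensions G α T → G.Adj u v →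
      v ∈ insert x T := by
    intro u v hu hv huv
    by_contra hvT
    obtain ⟨w, hw, huw⟩ := (h u hu).2
    exact hv ((hS.insert_of_mem_extensions hx hu).mem_extensions_of_adj (hdeg u) hu.1 hw huw
      (fun hvT' => hvT (mem_insert_of_mem hvT')) huv)
  have hT : (T : Set V) = ((insert x T : Finset V) : Set V) \ extensions G α T := by
    have hxR : x ∈ extensions G α T := ⟨hx, hS.prop⟩
    have hTR : ∀ v ∈ T, v ∉ extensions G α T := fun v hv hvR => hvR.1 hv
    ext v
    simp only [mem_coe, Set.mem_sdiff, mem_insert]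
    grind
  exact hS.not_isDeletionSet hx ⟨_, hc.piecewise f (fun v hv => (h v hv).1) hclosed hT⟩

end DeletionSet

section Defect

variable {V α : Type*} {G : SimpleGraph V} {f : V → Option α} {T : Finset V} {x y w : V}

open Classical in
variable (G) in
/-- The vertices of `S` with a neighbour in `S`. -/
noncomputable def nonIsolated (S : Finset V) : Finset V :=
  {v ∈ S | ∃ w ∈ S, G.Adj v w}

open Classical in
variable (G f) in
/-- The quantity minimised, in lexicographic order, among all minimum deletion sets: the number of
vertices of `S` outside the class `none` of `f`, then the number of non-isolated vertices of
`G[S]`. -/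
noncomputable def defect (S : Finset V) : ℕ ×ₗ ℕ :=
  toLex (#{v ∈ S | f v ≠ none}, #(nonIsolated G S))

variable [DecidableEq V]

lemma defect_insert_lt_of_eq_none (hx : x ∉ T) (hfx : f x ≠ none) (hfy : f y = none) :
    defect G f (insert y T) < defect G f (insert x T) := by
  classical
  rw [defect, defect, Prod.Lex.toLex_lt_toLex]
  left
  simp [filter_insert, hfx, hfy, hx]

lemma defect_insert_lt_of_forall_not_adj (hx : x ∉ T) (hfx : f x ≠ none) (hw : w ∈ T)
    (hxw : G.Adj x w) (hy : ∀ v ∈ T, ¬ G.Adj y v) :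
    defect G f (insert y T) < defect G f (insert x T) := by
  classical
  have hmisplaced : #{v ∈ insert y T | f v ≠ none} ≤ #{v ∈ insert x T | f v ≠ none} := by
    simp only [filter_insert, hfx, ne_eq, not_false_eq_true, if_true]
    rw [card_insert_of_notMem (by simp [hx])]
    split_ifs
    exacts [Nat.le_succ _, card_insert_le _ _]
  have hnonIsolated : nonIsolated G (insert y T) ⊂ nonIsolated G (insert x T) := by
    refine (ssubset_iff_of_subset fun v => ?_).2 ⟨x, ?_, ?_⟩ <;>
      simp only [nonIsolated, mem_filter, mem_insert]
    · grind [G.adj_comm, G.irrefl]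
    · exact ⟨.inl trivial, w, .inr hw, hxw⟩
    · grind
  rw [defect, defect, Prod.Lex.toLex_lt_toLex]
  exact hmisplaced.lt_or_eq.imp_right fun h => ⟨h, card_lt_card hnonIsolated⟩

end Defect

section Independence

variable {V α : Type*} {G : SimpleGraph V}

theorem exists_isMinDeletionSet_isIndepSet [G.LocallyFinite] [Fintype α]
    (hdeg : ∀ v, G.degree v ≤ Fintype.card α + 1) (f : G.Coloring (Option α))
    (hex : ∃ S, IsDeletionSet G α S) :
    ∃ S, IsMinDeletionSet G α S ∧ G.IsIndepSet S := by
  classical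
  obtain ⟨S, hS⟩ := exists_minimalFor_of_wellFoundedLT (IsMinDeletionSet G α) (defect G f)
    (exists_minimalFor_of_wellFoundedLT _ card hex)
  refine ⟨S, hS.prop, ?_⟩
  have hnot_adj : ∀ x ∈ S, ∀ w ∈ S, f x ≠ none → ¬ G.Adj x w := by
    intro x hx w hw hfx hxw
    obtain ⟨T, hxT, rfl⟩ : ∃ T, x ∉ T ∧ insert x T = S :=
      ⟨S.erase x, notMem_erase x S, insert_erase hx⟩
    obtain ⟨y, hy, hfy | hyT⟩ := hS.prop.exists_mem_extensions hdeg f hxT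
    all_goals refine hS.not_lt (hS.prop.insert_of_mem_extensions hxT hy) ?_
    · exact defect_insert_lt_of_eq_none hxT hfx hfy
    · exact defect_insert_lt_of_forall_not_adj hxT hfx (mem_of_mem_insert_of_ne hw hxw.ne') hxw hyT
  intro u hu v hv _ huv
  by_cases hfu : f u = none
  · exact hnot_adj v hv u hu (fun hfv => f.valid huv (hfu.trans hfv.symm)) huv.symm
  · exact hnot_adj u hu v hv hfu huv

end Independence

section ChromaticNumber

variable {V : Type*} [Fintype V] {G : SimpleGraph V} {n : ℕ} {S : Finset V}

lemma chi_le_iff_colorable : chi G ≤ n ↔ G.Colorable n := by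
  have hfin : G.chromaticNumber ≠ ⊤ :=
    SimpleGraph.chromaticNumber_ne_top_iff_exists.2 ⟨_, G.colorable_of_fintype⟩
  rw [← SimpleGraph.chromaticNumber_le_iff_colorable, chi, ← ENat.natCast_toNat hfin, Nat.cast_le,
    ENat.toNat_natCast]

lemma chi_pos [Nonempty V] : 0 < chi G := by
  by_contra! hzero
  exact not_isEmpty_of_nonempty V (G.colorable_zero_iff.1 (chi_le_iff_colorable.1 hzero))

variable [DecidableEq V]

lemma isDeletionSet_fin_iff_chi_le :
    IsDeletionSet G (Fin n) S ↔ chi (G.induce (↑(Sᶜ) : Set V)) ≤ n := by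
  rw [chi_le_iff_colorable]
  constructor
  · rintro ⟨c, hc⟩
    have hsome (v : (↑(Sᶜ) : Set V)) : (c v).isSome := by
      simpa [Option.isSome_iff_ne_none, hc.eq_none_iff] using v.2
    refine ⟨.mk (fun v => (c v).get (hsome v)) fun {u v} huv heq => ?_⟩
    exact Option.isSome_iff_ne_none.1 (hsome u) (hc.valid huv (Option.get_inj.1 heq))
  · rintro ⟨C⟩
    refine ⟨fun v => if hv : v ∈ S then none else some (C ⟨v, by simpa using hv⟩), ?_, ?_⟩
    · simp
    · intro u v huv heq
      by_cases hu : u ∈ S <;> by_cases hv : v ∈ S <;> simp only [hu, hv, dite_true, dite_false,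
        Option.some.injEq, reduceCtorEq] at heq ⊢
      exact C.valid (v := ⟨u, by simpa using hu⟩) (w := ⟨v, by simpa using hv⟩) huv heq

lemma chi_le_chi_induce_compl_add_one (hS : G.IsIndepSet S) :
    chi G ≤ chi (G.induce (↑(Sᶜ) : Set V)) + 1 := by
  obtain ⟨c, hc⟩ := isDeletionSet_fin_iff_chi_le.2 (le_refl (chi (G.induce (↑(Sᶜ) : Set V))))
  let C : G.Coloring (Option (Fin (chi (G.induce (↑(Sᶜ) : Set V))))) := .mk c fun huv heq =>
    hS ((hc.eq_none_iff _).1 (hc.valid huv heq))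
      ((hc.eq_none_iff _).1 (heq ▸ hc.valid huv heq)) huv.ne huv
  exact chi_le_iff_colorable.2 (by simpa using C.colorable)

lemma IsMinDeletionSet.vsChi_eq_ivsChi (hS : IsMinDeletionSet G (Fin n) S)
    (hindep : G.IsIndepSet S) (hn : chi G = n + 1) : vsChi G = ivsChi G := by
  have hchi : chi (G.induce (↑(Sᶜ) : Set V)) = chi G - 1 := by
    have hle := isDeletionSet_fin_iff_chi_le.1 hS.prop
    have hge := chi_le_chi_induce_compl_add_one hindep
    lia
  have hcard (R : Finset V) (hR : chi (G.induce (↑(Rᶜ) : Set V)) = chi G - 1) : #S ≤ #R :=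
    hS.le (isDeletionSet_fin_iff_chi_le.2 (by lia))
  have hvs : vsChi G = #S :=
    IsLeast.csInf_eq ⟨⟨S, rfl, hchi⟩, by rintro _ ⟨R, rfl, hR⟩; exact hcard R hR⟩
  have hivs : ivsChi G = #S := by
    refine IsLeast.csInf_eq ⟨⟨S, rfl, ?_, hchi⟩, by rintro _ ⟨R, rfl, -, hR⟩; exact hcard R hR⟩
    exact fun x hx y hy hxy => hindep hx hy hxy.ne hxy
  rw [hvs, hivs]

end ChromaticNumber

end ChromaticStability

open ChromaticStability in
/-- If `G` is a nonempty finite simple graph with `χ(G) ∈ {Δ(G), Δ(G)+1}`,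
then `vs_χ(G) = ivs_χ(G)`. -/
theorem stmt_0 {V : Type*} [Fintype V] [DecidableEq V] [Nonempty V] (G : SimpleGraph V)
    (h : chi G = maxDeg G ∨ chi G = maxDeg G + 1) :
    vsChi G = ivsChi G := by
  obtain ⟨n, hn⟩ : ∃ n, chi G = n + 1 := Nat.exists_eq_add_one.2 chi_pos
  let _ := Classical.decRel G.Adj
  have hdeg (v : V) : G.degree v ≤ Fintype.card (Fin n) + 1 := by
    have hmax : G.degree v ≤ maxDeg G := G.degree_le_maxDegree v
    rw [Fintype.card_fin]
    lia
  let f : G.Coloring (Option (Fin n)) := (chi_le_iff_colorable.1 hn.le).toColoring (by simp)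
  obtain ⟨S, hmin, hindep⟩ := exists_isMinDeletionSet_isIndepSet hdeg f ⟨univ, isDeletionSet_univ⟩
  exact hmin.vsChi_eq_ivsChi hindep hn
end

section
/- For every natural number n ≥ 11, there exist at least 2^⌊(n−11)/2⌋ pairwise non-isomorphic finite simple graphs G on n vertices with Δ(G) = 4, χ(G) = 3, ivs_χ(G) = 3 and vs_χ(G) = 2. -/
/-
The graphs consist of a core on nine vertices and a caterpillar hanging from it. The core has two
adjacent vertices `0` and `1` of degree four, and deleting them leaves a bipartite graph. An
independent set meeting every odd cycle cannot contain both: if it contains `0` but not `1`, it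
avoids the neighbours `2` and `3` of `0` and must meet both paths of length three from `2` to `3`,
since each closes up to a pentagon through `1`; if it contains neither, it contains the apex of
each of the triangles on the edge `01`. In all cases it has at least three vertices.

An isomorphism preserves the set of vertices of degree four, hence the distance to that set. Each
distance at least two is attained by one spine vertex of the caterpillar and otherwise only by the
leaf of the previous spine vertex, if there is one, so the isomorphism type of the graph determines
the set of leaves, which can be chosen freely.
-/

open Finset

section Coloring

variable {V : Type*} {G : SimpleGraph V} {S : Set V} {k : ℕ}

lemma chi_eq_add_one_iff [Fintype V] :
    chi G = k + 1 ↔ G.Colorable (k + 1) ∧ ¬ G.Colorable k := by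
  rw [← SimpleGraph.chromaticNumber_eq_iff_colorable_not_colorable, chi]
  exact_mod_cast ENat.toNat_eq_iff k.succ_ne_zero

lemma colorable_chi [Fintype V] : G.Colorable (chi G) :=
  G.colorable_chromaticNumber_of_fintype

lemma chi_induce_compl_eq_two [Fintype V] [DecidableEq V] {S : Finset V}
    (hS : (G.induce (S : Set V)ᶜ).Colorable 2) {u v : V} (huv : G.Adj u v) (hu : u ∉ S)
    (hv : v ∉ S) : chi (G.induce (↑Sᶜ : Set V)) = 2 := by
  rw [← Finset.coe_compl] at hS
  exact chi_eq_add_one_iff.2 ⟨hS, fun ⟨C⟩ =>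
    C.valid (v := ⟨u, by simpa using hu⟩) (w := ⟨v, by simpa using hv⟩) huv
      (Subsingleton.elim _ _)⟩

lemma colorable_add_one_of_isIndepSet (hS : G.IsIndepSet S) (hG : (G.induce Sᶜ).Colorable k) :
    G.Colorable (k + 1) := by
  classical
  obtain ⟨C⟩ := hG
  have C' : G.Coloring (Option (Fin k)) :=
    .mk (fun v => if hv : v ∈ S then none else some (C ⟨v, hv⟩)) fun {u v} huv => by
      by_cases hu : u ∈ S <;> by_cases hv : v ∈ S
      · exact (hS hu hv huv.ne huv).elim
      · simp [hu, hv]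
      · simp [hu, hv]
      · simpa [hu, hv] using C.valid (v := ⟨u, hu⟩) (w := ⟨v, hv⟩) huv
  simpa using C'.colorable

lemma exists_mem_support_of_odd_length (hG : (G.induce Sᶜ).Colorable 2) {v : V}
    (w : G.Walk v v) (hw : Odd w.length) : ∃ u ∈ w.support, u ∈ S := by
  by_contra! hS
  have heven := SimpleGraph.two_colorable_iff_forall_loop_even.1 hG _ (w.induce Sᶜ hS)
  rw [← SimpleGraph.Walk.length_map (SimpleGraph.Embedding.induce Sᶜ).toHom,
    SimpleGraph.Walk.map_induce] at heven
  exact Nat.not_even_iff_odd.2 hw heven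

lemma mem_of_triangle (hG : (G.induce Sᶜ).Colorable 2) {a b c : V}
    (hab : G.Adj a b) (hbc : G.Adj b c) (hca : G.Adj c a) : a ∈ S ∨ b ∈ S ∨ c ∈ S := by
  obtain ⟨u, hu, huS⟩ := exists_mem_support_of_odd_length hG
    (.cons hab (.cons hbc hca.toWalk)) ⟨1, rfl⟩
  aesop

lemma mem_of_pentagon (hG : (G.induce Sᶜ).Colorable 2) {a b c d e : V} (hab : G.Adj a b)
    (hbc : G.Adj b c) (hcd : G.Adj c d) (hde : G.Adj d e) (hea : G.Adj e a) :
    a ∈ S ∨ b ∈ S ∨ c ∈ S ∨ d ∈ S ∨ e ∈ S := by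
  obtain ⟨u, hu, huS⟩ := exists_mem_support_of_odd_length hG
    (.cons hab (.cons hbc (.cons hcd (.cons hde hea.toWalk)))) ⟨2, rfl⟩
  aesop

lemma colorable_two_of_forall_adj (P : V → Prop) (hP : ∀ u v, G.Adj u v → ¬ (P u ↔ P v)) :
    G.Colorable 2 := by
  have C : G.Coloring Prop := .mk P fun {u v} huv heq => hP u v huv (iff_of_eq heq)
  simpa using C.colorable

end Coloring

section Degree

variable {V : Type*} [Fintype V] {G : SimpleGraph V} {d : ℕ}

lemma deg_le_card_of_forall_adj {W : Type*} {f : V → W} (hf : Function.Injective f) {v : V}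
    {t : Finset W} (ht : ∀ w, G.Adj v w → f w ∈ t) : deg G v ≤ #t := by
  classical
  exact Finset.card_le_card_of_injOn f
    (fun w hw => ht w ((G.mem_neighborFinset v w).1 hw)) hf.injOn

lemma deg_iso {W : Type*} [Fintype W] {H : SimpleGraph W} (φ : G ≃g H) (v : V) :
    deg H (φ v) = deg G v := by
  classical
  exact φ.degree_eq v

lemma maxDeg_eq (hle : ∀ v, deg G v ≤ d) {v : V} (hv : deg G v = d) : maxDeg G = d := by
  classical
  exact le_antisymm (G.maxDegree_le_of_forall_degree_le d hle)
    (hv ▸ G.degree_le_maxDegree v)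

end Degree

section LevelFunction

variable {V W : Type*} {G : SimpleGraph V} {H : SimpleGraph W} {f g : V → ℕ}

/-- `f` is a level function of `G` if, at every non-isolated vertex `v`, the number `f v` is the
distance from `v` to the zeros of `f`, expressed locally: `f` grows by at most one along an edge,
and every non-isolated vertex with `f v ≠ 0` has a neighbour one level lower. -/
structure IsLevelFunction (G : SimpleGraph V) (f : V → ℕ) : Prop where
  le_add_one : ∀ ⦃u v⦄, G.Adj u v → f v ≤ f u + 1
  exists_adj : ∀ ⦃v⦄, v ∈ G.support → f v ≠ 0 → ∃ u, G.Adj u v ∧ f v = f u + 1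

lemma IsLevelFunction.comp_iso {f : W → ℕ} (hf : IsLevelFunction H f) (φ : G ≃g H) :
    IsLevelFunction G (f ∘ φ) where
  le_add_one _ _ huv := hf.le_add_one (φ.map_adj_iff.2 huv)
  exists_adj v hv h0 := by
    obtain ⟨w, hvw⟩ := hv
    obtain ⟨u, hu, hfu⟩ := hf.exists_adj ⟨φ w, φ.map_adj_iff.2 hvw⟩ h0
    obtain ⟨u, rfl⟩ := φ.surjective u
    exact ⟨u, φ.map_adj_iff.1 hu, hfu⟩

lemma IsLevelFunction.le_of_zero_imp (hf : IsLevelFunction G f) (hg : IsLevelFunction G g)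
    (h0 : ∀ v, g v = 0 → f v = 0) {v : V} (hv : v ∈ G.support) : f v ≤ g v := by
  induction hk : g v generalizing v with
  | zero => exact (h0 v hk).le
  | succ k ih =>
    obtain ⟨u, huv, hu⟩ := hg.exists_adj hv (by omega)
    have hfu : f u ≤ k := ih ⟨v, huv⟩ (by omega)
    have hfv : f v ≤ f u + 1 := hf.le_add_one huv
    omega

lemma IsLevelFunction.eq_of_zero_iff (hf : IsLevelFunction G f) (hg : IsLevelFunction G g)
    (h0 : ∀ v, f v = 0 ↔ g v = 0) {v : V} (hv : v ∈ G.support) : f v = g v :=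
  le_antisymm (hf.le_of_zero_imp hg (fun v => (h0 v).2) hv)
    (hg.le_of_zero_imp hf (fun v => (h0 v).1) hv)

end LevelFunction

section Core

/-- The edges of the core: the triangles `0 1 2`, `0 1 3` and `0 1 7`, and the two paths
`2 4 5 3` and `2 6 8 3`. -/
def coreEdges : Finset (ℕ × ℕ) :=
  {(0, 1), (0, 2), (1, 2), (0, 3), (1, 3), (0, 7), (1, 7),
    (2, 4), (4, 5), (3, 5), (2, 6), (6, 8), (3, 8)}

/-- The nine-vertex graph responsible for the gap between the two stability numbers. -/
def core : SimpleGraph (Fin 9) :=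
  SimpleGraph.fromRel fun u v => ((u : ℕ), (v : ℕ)) ∈ coreEdges

instance : DecidableRel core.Adj :=
  inferInstanceAs (DecidableRel fun u v : Fin 9 =>
    u ≠ v ∧ (((u : ℕ), (v : ℕ)) ∈ coreEdges ∨ ((v : ℕ), (u : ℕ)) ∈ coreEdges))

variable {T : Finset (Fin 9)}

lemma core_three_le_card_of_mem (hind : core.IsIndepSet (T : Set (Fin 9)))
    (hcol : (core.induce (T : Set (Fin 9))ᶜ).Colorable 2) {a b : Fin 9} (ha : a < 2)
    (hb : b < 2) (hab : a ≠ b) (haT : a ∈ T) : 3 ≤ #T := by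
  have hadj : ∀ a b : Fin 9, a < 2 → b < 2 → a ≠ b →
      core.Adj a b ∧ core.Adj a 2 ∧ core.Adj a 3 := by decide
  obtain ⟨hab, ha2, ha3⟩ := hadj a b ha hb hab
  obtain ⟨-, hb2, hb3⟩ := hadj b a hb ha hab.ne'
  have hnot {v : Fin 9} (hav : core.Adj a v) : v ∉ T := fun hv => hind haT hv hav.ne hav
  have hmeet {c d : Fin 9} (h2c : core.Adj 2 c) (hcd : core.Adj c d) (hd3 : core.Adj d 3) :
      c ∈ T ∨ d ∈ T := by
    simpa [hnot hab, hnot ha2, hnot ha3] using mem_of_pentagon hcol hb2 h2c hcd hd3 hb3.symm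
  obtain ⟨c, hc, hcT⟩ : ∃ c, (c = 4 ∨ c = 5) ∧ c ∈ T := by
    simpa using hmeet (c := 4) (d := 5) (by decide) (by decide) (by decide)
  obtain ⟨d, hd, hdT⟩ : ∃ d, (d = 6 ∨ d = 8) ∧ d ∈ T := by
    simpa using hmeet (c := 6) (d := 8) (by decide) (by decide) (by decide)
  exact Finset.two_lt_card.2 ⟨a, haT, c, hcT, d, hdT, by omega, by omega, by omega⟩

lemma core_three_le_card (hind : core.IsIndepSet (T : Set (Fin 9)))
    (hcol : (core.induce (T : Set (Fin 9))ᶜ).Colorable 2) : 3 ≤ #T := by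
  by_cases h0 : 0 ∈ T
  · exact core_three_le_card_of_mem hind hcol (b := 1) (by decide) (by decide) (by decide) h0
  by_cases h1 : 1 ∈ T
  · exact core_three_le_card_of_mem hind hcol (b := 0) (by decide) (by decide) (by decide) h1
  have hapex {c : Fin 9} (h1c : core.Adj 1 c) (hc0 : core.Adj c 0) : c ∈ T := by
    simpa [h0, h1] using mem_of_triangle hcol (by decide : core.Adj 0 1) h1c hc0
  have h2 : 2 ∈ T := hapex (by decide) (by decide)
  have h3 : 3 ∈ T := hapex (by decide) (by decide)
  have h7 : 7 ∈ T := hapex (by decide) (by decide)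
  exact Finset.two_lt_card.2 ⟨2, h2, 3, h3, 7, h7, by decide, by decide, by decide⟩

lemma three_le_card_of_core_copy {V : Type*} {G : SimpleGraph V} (f : core.Copy G)
    {S : Finset V} (hind : G.IsIndepSet (S : Set V))
    (hcol : (G.induce (S : Set V)ᶜ).Colorable 2) : 3 ≤ #S := by
  let T := S.preimage f f.injective.injOn
  have hT : ∀ v, v ∈ T ↔ f v ∈ S := fun v => Finset.mem_preimage
  have hTind : core.IsIndepSet (T : Set (Fin 9)) := fun u hu v hv huv hadj =>
    hind ((hT u).1 hu) ((hT v).1 hv) (f.injective.ne huv) (f.toHom.map_adj hadj)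
  have hTcol : (core.induce (T : Set (Fin 9))ᶜ).Colorable 2 :=
    hcol.of_hom (SimpleGraph.induceHom f.toHom fun v hv => mt (hT v).2 hv)
  exact (core_three_le_card hTind hTcol).trans
    (Finset.card_le_card_of_injOn f (fun v hv => (hT v).1 hv) f.injective.injOn)

end Core

section TailedCore

/-- The edges `u < v` of the graphs of the family: those of the core, those of the spine
`7, 9, 11, 13, …`, and for each `i ∈ s` an edge joining the spine vertex `9 + 2 * i` to the leaf
`10 + 2 * i`. -/
inductive TailedCoreEdge (s : Set ℕ) : ℕ → ℕ → Prop
  | core {u v : ℕ} (h : (u, v) ∈ coreEdges) : TailedCoreEdge s u v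
  | spine (i : ℕ) : TailedCoreEdge s (7 + 2 * i) (9 + 2 * i)
  | leaf {i : ℕ} (hi : i ∈ s) : TailedCoreEdge s (9 + 2 * i) (10 + 2 * i)

/-- The core with a caterpillar attached at the vertex `7`, truncated to `n` vertices; the set `s`
says which spine vertices carry a leaf. The vertices `10 + 2 * i` with `i ∉ s` are isolated. -/
def tailedCore (s : Set ℕ) (n : ℕ) : SimpleGraph (Fin n) :=
  SimpleGraph.fromRel fun u v => TailedCoreEdge s u v

variable {s : Set ℕ} {n u v : ℕ}

lemma lt_of_mem_coreEdges (h : (u, v) ∈ coreEdges) : u < v ∧ v < 9 :=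
  (by decide : ∀ p ∈ coreEdges, p.1 < p.2 ∧ p.2 < 9) _ h

lemma TailedCoreEdge.lt (h : TailedCoreEdge s u v) : u < v := by
  rcases h with h | i | hi
  · exact (lt_of_mem_coreEdges h).1
  · omega
  · omega

lemma tailedCore_adj {u v : Fin n} :
    (tailedCore s n).Adj u v ↔ TailedCoreEdge s u v ∨ TailedCoreEdge s v u := by
  rw [tailedCore, SimpleGraph.fromRel_adj, and_iff_right_iff_imp]
  rintro (h | h) rfl <;> exact h.lt.false

lemma TailedCoreEdge.adj (h : TailedCoreEdge s u v) (hv : v < n) :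
    (tailedCore s n).Adj ⟨u, h.lt.trans hv⟩ ⟨v, hv⟩ :=
  tailedCore_adj.2 (.inl h)

/-- The copy of the core on the first nine vertices. -/
def coreCopy (s : Set ℕ) (hn : 9 ≤ n) : core.Copy (tailedCore s n) where
  toHom.toFun := Fin.castLE hn
  toHom.map_rel' h := tailedCore_adj.2 (h.2.imp .core .core)
  injective' := Fin.castLE_injective hn

end TailedCore

section TailedCoreDegree

variable {s : Set ℕ} {n : ℕ}

/-- The neighbours within the core of a vertex of the core. -/
def coreNeighbors (v : ℕ) : Finset ℕ :=
  {w ∈ Finset.range 9 | (v, w) ∈ coreEdges ∨ (w, v) ∈ coreEdges}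

lemma TailedCoreEdge.mem_coreNeighbors_or {v w : ℕ}
    (h : TailedCoreEdge s v w ∨ TailedCoreEdge s w v) (hv : v < 9) :
    w ∈ coreNeighbors v ∨ v = 7 ∧ w = 9 := by
  simp only [coreNeighbors, Finset.mem_filter, Finset.mem_range]
  rcases h with (h | i | hi) | (h | i | hi)
  · have := lt_of_mem_coreEdges h
    exact .inl ⟨this.2, .inl h⟩
  · omega
  · omega
  · have := lt_of_mem_coreEdges h
    exact .inl ⟨by omega, .inr h⟩
  · omega
  · omega

lemma TailedCoreEdge.mem_of_nine_le {v w : ℕ}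
    (h : TailedCoreEdge s v w ∨ TailedCoreEdge s w v) (hv : 9 ≤ v) :
    w ∈ ({v - 2, if v % 2 = 1 then v + 1 else v - 1, v + 2} : Finset ℕ) := by
  simp only [Finset.mem_insert, Finset.mem_singleton]
  rcases h with (h | i | hi) | (h | i | hi)
  · have := lt_of_mem_coreEdges h
    omega
  · omega
  · split_ifs <;> omega
  · have := lt_of_mem_coreEdges h
    omega
  · omega
  · split_ifs <;> omega

lemma deg_tailedCore_le_three {v : Fin n} (hv : 4 ≤ (v : ℕ)) : deg (tailedCore s n) v ≤ 3 := by
  by_cases h9 : (v : ℕ) < 9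
  · have hcard : ∀ v < 9, 4 ≤ v → #(insert 9 (coreNeighbors v)) ≤ 3 := by decide
    refine (deg_le_card_of_forall_adj Fin.val_injective fun w hw => ?_).trans (hcard v h9 hv)
    rw [Finset.mem_insert]
    exact (TailedCoreEdge.mem_coreNeighbors_or (tailedCore_adj.1 hw) h9).symm.imp_left And.right
  · exact (deg_le_card_of_forall_adj Fin.val_injective fun w hw =>
      TailedCoreEdge.mem_of_nine_le (tailedCore_adj.1 hw) (not_lt.1 h9)).trans Finset.card_le_three

lemma deg_tailedCore_eq_four (hn : 9 ≤ n) {v : Fin n} (hv : (v : ℕ) < 4) :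
    deg (tailedCore s n) v = 4 := by
  refine le_antisymm ?_ ?_
  · have hcard : ∀ v < 4, #(coreNeighbors v) = 4 := by decide
    refine (deg_le_card_of_forall_adj Fin.val_injective fun w hw => ?_).trans (hcard v hv).le
    exact (TailedCoreEdge.mem_coreNeighbors_or (tailedCore_adj.1 hw) (by omega)).resolve_right
      (by omega)
  · classical
    have hcore : ∀ u : Fin 9, (u : ℕ) < 4 → core.degree u = 4 := by decide
    rw [← hcore ⟨v, by omega⟩ hv]
    exact (coreCopy s hn).degree_le ⟨v, by omega⟩

lemma deg_tailedCore_eq_four_iff (hn : 9 ≤ n) {v : Fin n} :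
    deg (tailedCore s n) v = 4 ↔ (v : ℕ) < 4 := by
  refine ⟨fun h => ?_, deg_tailedCore_eq_four hn⟩
  by_contra! hv
  have := deg_tailedCore_le_three (s := s) hv
  omega

lemma maxDeg_tailedCore (hn : 9 ≤ n) : maxDeg (tailedCore s n) = 4 := by
  refine maxDeg_eq (v := ⟨0, by omega⟩) (fun v => ?_) (deg_tailedCore_eq_four hn (by simp))
  obtain hv | hv := lt_or_ge (v : ℕ) 4
  · exact (deg_tailedCore_eq_four hn hv).le
  · exact (deg_tailedCore_le_three hv).trans (by norm_num)

end TailedCoreDegree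

section TailedCoreStability

variable {s : Set ℕ} {n : ℕ}

/-- A colour class of a two-colouring of `tailedCore s n` with the vertices `0` and `1` deleted
(for `z = 2`), or with the vertices `0`, `4` and `6` deleted (for `z = 1`). -/
def IsWhite (z v : ℕ) : Prop :=
  v = z ∨ v = 5 ∨ v = 8 ∨ 9 ≤ v ∧ v / 2 % 2 = 0

instance (z : ℕ) : DecidablePred (IsWhite z) := fun v =>
  inferInstanceAs (Decidable (v = z ∨ v = 5 ∨ v = 8 ∨ 9 ≤ v ∧ v / 2 % 2 = 0))

lemma colorable_two_tailedCore_induce_compl {D : Finset ℕ} (hD : ∀ m ∈ D, m < n) {z : ℕ}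
    (hz : z < 7)
    (hcore : ∀ p ∈ coreEdges, p.1 ∉ D → p.2 ∉ D → ¬ (IsWhite z p.1 ↔ IsWhite z p.2)) :
    ((tailedCore s n).induce (D.attachFin hD : Set (Fin n))ᶜ).Colorable 2 := by
  have hedge {u v : ℕ} (h : TailedCoreEdge s u v) (hu : u ∉ D) (hv : v ∉ D) :
      ¬ (IsWhite z u ↔ IsWhite z v) := by
    rcases h with h | i | hi
    · exact hcore _ h hu hv
    · unfold IsWhite
      omega
    · unfold IsWhite
      omega
  refine colorable_two_of_forall_adj (fun v => IsWhite z v.1) ?_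
  rintro ⟨u, hu⟩ ⟨v, hv⟩ huv
  rw [Set.mem_compl_iff, Finset.mem_coe, Finset.mem_attachFin] at hu hv
  rcases tailedCore_adj.1 huv with h | h
  · exact hedge h hu hv
  · exact fun hiff => hedge h hv hu hiff.symm

lemma isIndepSet_tailedCore_attachFin {D : Finset ℕ} (hD : ∀ m ∈ D, m < n)
    (hD9 : ∀ m ∈ D, m < 9) (hcore : ∀ p ∈ coreEdges, ¬ (p.1 ∈ D ∧ p.2 ∈ D)) :
    (tailedCore s n).IsIndepSet (D.attachFin hD : Set (Fin n)) := by
  have hedge {u v : ℕ} (h : TailedCoreEdge s u v) (hu : u ∈ D) (hv : v ∈ D) : False := by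
    have := hD9 v hv
    rcases h with h | i | hi
    · exact hcore _ h ⟨hu, hv⟩
    · omega
    · omega
  intro u hu v hv _ huv
  rw [Finset.mem_coe, Finset.mem_attachFin] at hu hv
  exact (tailedCore_adj.1 huv).elim (hedge · hu hv) (hedge · hv hu)

lemma three_le_card_of_chi_induce_compl (hn : 9 ≤ n) {S : Finset (Fin n)}
    (hind : (tailedCore s n).IsIndepSet (S : Set (Fin n)))
    (hS : chi ((tailedCore s n).induce (↑Sᶜ : Set (Fin n))) = 2) : 3 ≤ #S := by
  refine three_le_card_of_core_copy (coreCopy s hn) hind ?_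
  rw [← Finset.coe_compl, ← hS]
  exact colorable_chi

lemma isIndepSet_tailedCore_triple (hD : ∀ m ∈ ({0, 4, 6} : Finset ℕ), m < n) :
    (tailedCore s n).IsIndepSet (Finset.attachFin {0, 4, 6} hD : Set (Fin n)) :=
  isIndepSet_tailedCore_attachFin hD (by decide) (by decide)

lemma colorable_two_tailedCore_compl_triple (hD : ∀ m ∈ ({0, 4, 6} : Finset ℕ), m < n) :
    ((tailedCore s n).induce (Finset.attachFin {0, 4, 6} hD : Set (Fin n))ᶜ).Colorable 2 :=
  colorable_two_tailedCore_induce_compl hD (z := 1) (by norm_num) (by decide)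

lemma chi_tailedCore (hn : 9 ≤ n) : chi (tailedCore s n) = 3 := by
  have hD : ∀ m ∈ ({0, 4, 6} : Finset ℕ), m < n := fun m hm =>
    ((by decide : ∀ m ∈ ({0, 4, 6} : Finset ℕ), m < 9) m hm).trans_le hn
  refine chi_eq_add_one_iff.2 ⟨colorable_add_one_of_isIndepSet (isIndepSet_tailedCore_triple hD)
    (colorable_two_tailedCore_compl_triple hD), fun hcol => ?_⟩
  have hempty := three_le_card_of_core_copy (coreCopy s hn) (S := ∅) (by simp)
    (hcol.of_hom (SimpleGraph.Embedding.induce _).toHom)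
  simp at hempty

lemma ivsChi_tailedCore (hn : 9 ≤ n) : ivsChi (tailedCore s n) = 3 := by
  rw [ivsChi, chi_tailedCore hn]
  refine IsLeast.csInf_eq ⟨?_, ?_⟩
  · have hD : ∀ m ∈ ({0, 4, 6} : Finset ℕ), m < n := fun m hm =>
      ((by decide : ∀ m ∈ ({0, 4, 6} : Finset ℕ), m < 9) m hm).trans_le hn
    have hind := isIndepSet_tailedCore_triple (s := s) hD
    refine ⟨Finset.attachFin {0, 4, 6} hD, by simp, fun x hx y hy hxy => hind hx hy hxy.ne hxy, ?_⟩
    have h12 : TailedCoreEdge s 1 2 := .core (by decide)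
    exact chi_induce_compl_eq_two (colorable_two_tailedCore_compl_triple hD)
      (h12.adj (by omega)) (by simp) (by simp)
  · rintro _ ⟨S, rfl, hind, hS⟩
    exact three_le_card_of_chi_induce_compl hn (fun x hx y hy _ => hind x hx y hy) hS

lemma vsChi_tailedCore (hn : 9 ≤ n) : vsChi (tailedCore s n) = 2 := by
  rw [vsChi, chi_tailedCore hn]
  refine IsLeast.csInf_eq ⟨?_, ?_⟩
  · have hD : ∀ m ∈ ({0, 1} : Finset ℕ), m < n := fun m hm =>
      ((by decide : ∀ m ∈ ({0, 1} : Finset ℕ), m < 9) m hm).trans_le hn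
    refine ⟨Finset.attachFin {0, 1} hD, by simp, ?_⟩
    have h24 : TailedCoreEdge s 2 4 := .core (by decide)
    exact chi_induce_compl_eq_two
      (colorable_two_tailedCore_induce_compl hD (z := 2) (by norm_num) (by decide))
      (h24.adj (by omega)) (by simp) (by simp)
  · rintro _ ⟨S, rfl, hS⟩
    by_contra! hlt
    have hsub : (S : Set (Fin n)).Subsingleton :=
      fun x hx y hy => Finset.card_le_one.1 (Nat.le_of_lt_succ hlt) x hx y hy
    have := three_le_card_of_chi_induce_compl hn (hsub.pairwise _) hS
    omega

end TailedCoreStability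

section Level

variable {s t : Set ℕ} {n : ℕ}

/-- The distance from a non-isolated vertex of `tailedCore s n` to the vertices of degree four. -/
def level (v : ℕ) : ℕ :=
  if v < 4 then 0 else if v < 9 then 1 else v / 2 - 2

lemma level_eq_zero_iff {v : ℕ} : level v = 0 ↔ v < 4 := by
  grind [level]

lemma level_le_one {v : ℕ} (hv : v < 9) : level v ≤ 1 := by
  grind [level]

lemma level_nine_add (i : ℕ) : level (9 + 2 * i) = i + 2 := by
  grind [level]

lemma level_ten_add (i : ℕ) : level (10 + 2 * i) = i + 3 := by
  grind [level]

lemma TailedCoreEdge.level_le {u v : ℕ} (h : TailedCoreEdge s u v) :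
    level v ≤ level u + 1 ∧ level u ≤ level v + 1 := by
  rcases h with h | i | @⟨i, hi⟩
  · exact (by decide : ∀ p ∈ coreEdges, level p.2 ≤ level p.1 + 1 ∧ level p.1 ≤ level p.2 + 1) _ h
  · grind [level]
  · grind [level]

lemma TailedCoreEdge.lt_nine_or {v w : ℕ} (h : TailedCoreEdge s v w ∨ TailedCoreEdge s w v) :
    v < 9 ∨ (∃ i, v = 9 + 2 * i) ∨ ∃ i ∈ s, v = 10 + 2 * i := by
  rcases h with (h | i | @⟨i, hi⟩) | (h | i | @⟨i, hi⟩)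
  · exact .inl ((lt_of_mem_coreEdges h).1.trans (lt_of_mem_coreEdges h).2)
  · cases i with
    | zero => simp
    | succ i => exact .inr (.inl ⟨i, by ring⟩)
  · exact .inr (.inl ⟨i, rfl⟩)
  · exact .inl (lt_of_mem_coreEdges h).2
  · exact .inr (.inl ⟨i, rfl⟩)
  · exact .inr (.inr ⟨i, hi, rfl⟩)

lemma TailedCoreEdge.exists_lower {v w : ℕ} (h : TailedCoreEdge s v w ∨ TailedCoreEdge s w v)
    (hv : level v ≠ 0) : ∃ u, TailedCoreEdge s u v ∧ level v = level u + 1 := by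
  obtain h9 | ⟨i, rfl⟩ | ⟨i, hi, rfl⟩ := TailedCoreEdge.lt_nine_or h
  · have hcore : ∀ v < 9, level v ≠ 0 → ∃ u < 4, (u, v) ∈ coreEdges := by decide
    obtain ⟨u, hu, huv⟩ := hcore v h9 hv
    have := level_le_one h9
    have := level_eq_zero_iff.2 hu
    exact ⟨u, .core huv, by omega⟩
  · exact ⟨_, .spine i, by grind [level]⟩
  · exact ⟨_, .leaf hi, by rw [level_ten_add, level_nine_add]⟩

lemma isLevelFunction_tailedCore : IsLevelFunction (tailedCore s n) (fun v => level v) where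
  le_add_one u v huv := (tailedCore_adj.1 huv).elim (·.level_le.1) (·.level_le.2)
  exists_adj v hv h0 := by
    obtain ⟨w, hvw⟩ := hv
    obtain ⟨u, huv, hu⟩ := TailedCoreEdge.exists_lower (tailedCore_adj.1 hvw) h0
    exact ⟨⟨u, huv.lt.trans v.2⟩, huv.adj v.2, hu⟩

lemma level_apply_iso (hn : 9 ≤ n) (φ : tailedCore s n ≃g tailedCore t n) {v : Fin n}
    (hv : v ∈ (tailedCore s n).support) : level (φ v) = level v := by
  refine (isLevelFunction_tailedCore.comp_iso φ).eq_of_zero_iff isLevelFunction_tailedCore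
    (fun v => ?_) hv
  simp only [Function.comp_apply, level_eq_zero_iff]
  rw [← deg_tailedCore_eq_four_iff (s := t) hn, deg_iso, deg_tailedCore_eq_four_iff hn]

end Level

section Isomorphism

variable {s t : Set ℕ} {n i : ℕ}

lemma eq_nine_add_of_level_eq {v : Fin n} (hv : v ∈ (tailedCore s n).support)
    (hlevel : level v = i + 3) (hi : i ∉ s) : (v : ℕ) = 9 + 2 * (i + 1) := by
  obtain ⟨w, hvw⟩ := hv
  obtain h9 | ⟨j, hj⟩ | ⟨j, hjs, hj⟩ := TailedCoreEdge.lt_nine_or (tailedCore_adj.1 hvw)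
  · have := level_le_one h9
    omega
  · rw [hj, level_nine_add] at hlevel
    omega
  · rw [hj, level_ten_add, Nat.add_right_cancel_iff] at hlevel
    exact absurd (hlevel ▸ hjs) hi

lemma mem_of_iso (hn : 9 ≤ n) (φ : tailedCore s n ≃g tailedCore t n) (hin : 10 + 2 * i < n)
    (his : i ∈ s) : i ∈ t := by
  by_contra hit
  have himage {u v : Fin n} (huv : (tailedCore s n).Adj u v) (hlevel : level v = i + 3) :
      (φ v : ℕ) = 9 + 2 * (i + 1) :=
    eq_nine_add_of_level_eq (φ.map_adj_iff.2 huv).mem_support_right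
      ((level_apply_iso hn φ huv.mem_support_right).trans hlevel) hit
  have hleaf : (φ ⟨10 + 2 * i, hin⟩ : ℕ) = 9 + 2 * (i + 1) :=
    himage ((TailedCoreEdge.leaf his).adj hin) (level_ten_add i)
  have hspine_lt : 9 + 2 * (i + 1) < n := hleaf ▸ Fin.is_lt _
  have hspine : (φ ⟨9 + 2 * (i + 1), hspine_lt⟩ : ℕ) = 9 + 2 * (i + 1) :=
    himage ((TailedCoreEdge.spine (i + 1)).adj hspine_lt) (level_nine_add (i + 1))
  have heq := φ.injective (Fin.ext (hleaf.trans hspine.symm))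
  simp only [Fin.mk.injEq] at heq
  omega

lemma mem_iff_of_iso (hn : 9 ≤ n) (φ : tailedCore s n ≃g tailedCore t n)
    (hin : 10 + 2 * i < n) : i ∈ s ↔ i ∈ t :=
  ⟨mem_of_iso hn φ hin, mem_of_iso hn φ.symm hin⟩

end Isomorphism

theorem stmt_8_general (n : ℕ) (hn : 9 ≤ n) :
    ∃ f : Fin (2 ^ ((n - 9) / 2)) → SimpleGraph (Fin n),
      (∀ i, maxDeg (f i) = 4 ∧ chi (f i) = 3 ∧ ivsChi (f i) = 3 ∧ vsChi (f i) = 2) ∧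
      (∀ i j, i ≠ j → IsEmpty (f i ≃g f j)) := by
  refine ⟨fun i => tailedCore {k | Nat.testBit i k} n, fun i =>
    ⟨maxDeg_tailedCore hn, chi_tailedCore hn, ivsChi_tailedCore hn, vsChi_tailedCore hn⟩,
    fun i j hij => ⟨fun φ => hij (Fin.ext (Nat.eq_of_testBit_eq fun k => ?_))⟩⟩
  obtain hk | hk := lt_or_ge k ((n - 9) / 2)
  · exact Bool.eq_iff_iff.2 (mem_iff_of_iso hn φ (i := k) (by omega))
  · have hbit (m : Fin (2 ^ ((n - 9) / 2))) : Nat.testBit m k = false :=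
      Nat.testBit_lt_two_pow (m.2.trans_le (Nat.pow_le_pow_right two_pos hk))
    rw [hbit, hbit]

/-- For every `n ≥ 11` there are at least `2 ^ ⌊(n - 11)/2⌋` pairwise non-isomorphic graphs
on `n` vertices with `Δ = 4`, `χ = 3`, `ivs_χ = 3` and `vs_χ = 2`. -/
theorem stmt_8 (n : ℕ) (hn : 11 ≤ n) :
    ∃ f : Fin (2 ^ ((n - 11) / 2)) → SimpleGraph (Fin n),
      (∀ i, maxDeg (f i) = 4 ∧ chi (f i) = 3 ∧ ivsChi (f i) = 3 ∧ vsChi (f i) = 2) ∧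
      (∀ i j, i ≠ j → IsEmpty (f i ≃g f j)) := by
  obtain ⟨f, hf, hiso⟩ := stmt_8_general n (by omega)
  have hle : 2 ^ ((n - 11) / 2) ≤ 2 ^ ((n - 9) / 2) := Nat.pow_le_pow_right two_pos (by omega)
  exact ⟨f ∘ Fin.castLE hle, fun i => hf _,
    fun i j hij => hiso _ _ ((Fin.castLE_injective hle).ne hij)⟩
end
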